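/- arXiv:math/0309130 — 3 statements merged into one kernel-verified Lean document; each statement's English description precedes it below -/
import Mathlib

section
/- Let n ≥ 1 and k ≥ 1 be integers. Then ∫_{S_M} ‖f‖_∞ dμ(f) ≤ 2·√(2n(2k+1)), where ‖f‖_∞ = max_{x ∈ S^{n-1}} |f(x)|. -/
/-!
Write `‖·‖_p` for the `L^p(σ)` norm. The bound comes from comparing `‖f‖_∞` with `‖f‖_{2n}` and
averaging the latter over the unit sphere of `M`.

*Reproducing kernel* (`IsRotInvSphereProb.sum_sq_eq_card`). If `b₁, …, b_d` is an orthonormal basis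
of a rotation-invariant space of forms, then `∑ bᵢ(x)² = d` for every `x` on the sphere. Hence
`h(x)² ≤ d · ∫ h² dσ` for `h` in the space. Taking `h = f ^ n` in the space of forms of degree
`2kn`, whose dimension is at most `A = (n + 2kn - 1).choose (2kn)`, gives
`‖f‖_∞ ^ (2n) ≤ A · ∫ f ^ (2n) dσ` (`sq_peval_le`).

*Averaging* (`IsCoordOfM.integral_pow_le`). For `x` on the sphere, evaluation at `x` on `M` is the
pairing with a vector of squared norm `D = dim M`, again by the reproducing kernel identity. By
rotation invariance of `μ` that vector can be replaced by any sign vector in `{±1}^D`, which also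
has squared norm `D`. Averaging over all signs and bounding the average through
`∏ cosh (t yᵢ) ≤ exp (t² / 2)` shows that the mean of `f(x) ^ (2n)` over the unit sphere of `M` is
at most `8 ^ n * n!`.

Since `A * n! ≤ (n (2k + 1)) ^ n`, Fubini's theorem bounds the mean of `‖f‖_∞ ^ (2n)` by
`(8 n (2k + 1)) ^ n`, the `2n`-th power of the claimed bound, and Bernoulli's inequality passes
from the `2n`-th moment to the mean.
-/

open MeasureTheory MvPolynomial
open scoped ENNReal RealInnerProductSpace

noncomputable section

/-- Evaluation of a multivariate polynomial at a point of Euclidean space `ℝⁿ`. -/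
def peval {n : ℕ} (p : MvPolynomial (Fin n) ℝ) (x : EuclideanSpace ℝ (Fin n)) : ℝ :=
  MvPolynomial.eval (fun i => x i) p

/-- The `L²(σ)` inner product `⟨f,g⟩ = ∫ f·g dσ` on polynomials. -/
def pinner {n : ℕ} (σ : Measure (EuclideanSpace ℝ (Fin n)))
    (f g : MvPolynomial (Fin n) ℝ) : ℝ :=
  ∫ x, peval f x * peval g x ∂σ

/-- `μ` is a rotation-invariant probability measure concentrated on the unit sphere. -/
def IsRotInvSphereProb {E : Type*} [NormedAddCommGroup E] [NormedSpace ℝ E]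
    [MeasurableSpace E] (μ : Measure E) : Prop :=
  IsProbabilityMeasure μ ∧ μ (Metric.sphere (0 : E) 1)ᶜ = 0 ∧
    ∀ T : E ≃ₗᵢ[ℝ] E, Measure.map T μ = μ

/-- The hyperplane `M` of forms of degree `2k` with integral `0` on the sphere. -/
def Mset (n k : ℕ) (σ : Measure (EuclideanSpace ℝ (Fin n))) :
    Set (MvPolynomial (Fin n) ℝ) :=
  {f | f.IsHomogeneous (2 * k) ∧ ∫ x, peval f x ∂σ = 0}

/-- The form `r^{2k} = (x₁² + ⋯ + xₙ²)^k`. -/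
def rSq (n k : ℕ) : MvPolynomial (Fin n) ℝ :=
  (∑ i : Fin n, X i ^ 2) ^ k

/-- The cone `C` of nonnegative forms of degree `2k`. -/
def Cset (n k : ℕ) : Set (MvPolynomial (Fin n) ℝ) :=
  {f | f.IsHomogeneous (2 * k) ∧ ∀ x : EuclideanSpace ℝ (Fin n), 0 ≤ peval f x}

/-- The cone `Sq` of sums of squares of forms of degree `k`. -/
def Sqset (n k : ℕ) : Set (MvPolynomial (Fin n) ℝ) :=
  {f | ∃ (m : ℕ) (g : Fin m → MvPolynomial (Fin n) ℝ),
    (∀ i, (g i).IsHomogeneous k) ∧ f = ∑ i, g i ^ 2}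

/-- The compact base `C̃ = {f ∈ M : f + r^{2k} ∈ C}`. -/
def Ctilde (n k : ℕ) (σ : Measure (EuclideanSpace ℝ (Fin n))) :
    Set (MvPolynomial (Fin n) ℝ) :=
  {f ∈ Mset n k σ | f + rSq n k ∈ Cset n k}

/-- The compact base `S̃q = {f ∈ M : f + r^{2k} ∈ Sq}`. -/
def Sqtilde (n k : ℕ) (σ : Measure (EuclideanSpace ℝ (Fin n))) :
    Set (MvPolynomial (Fin n) ℝ) :=
  {f ∈ Mset n k σ | f + rSq n k ∈ Sqset n k}

/-- `φ` is a linear isometry (w.r.t. the `L²(σ)` inner product) identifying Euclidean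
`D`-space with the hyperplane `M`; in particular `D = D_M = dim M`. -/
def IsCoordOfM (n k D : ℕ) (σ : Measure (EuclideanSpace ℝ (Fin n)))
    (φ : EuclideanSpace ℝ (Fin D) →ₗ[ℝ] MvPolynomial (Fin n) ℝ) : Prop :=
  Function.Injective φ ∧ Set.range φ = Mset n k σ ∧
    ∀ y z : EuclideanSpace ℝ (Fin D), pinner σ (φ y) (φ z) = ⟪y, z⟫

/-- The `L^∞` norm of a polynomial on the unit sphere `S^{n-1}`. -/
def supNorm {n : ℕ} (f : MvPolynomial (Fin n) ℝ) : ℝ :=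
  sSup ((fun x => |peval f x|) '' Metric.sphere (0 : EuclideanSpace ℝ (Fin n)) 1)

/-- The norm `‖f‖_sq = max {|⟨f, g²⟩| : g ∈ P_{n,k}, ⟨g,g⟩ = 1}`. -/
def sqNorm {n : ℕ} (k : ℕ) (σ : Measure (EuclideanSpace ℝ (Fin n)))
    (f : MvPolynomial (Fin n) ℝ) : ℝ :=
  sSup ((fun g => |pinner σ f (g ^ 2)|) ''
    {g : MvPolynomial (Fin n) ℝ | g.IsHomogeneous k ∧ pinner σ g g = 1})


/-! ### Rotation-invariant probability measures on the sphere -/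

section SphereMeasure

variable {E : Type*} [NormedAddCommGroup E] [InnerProductSpace ℝ E]

lemma exists_isometry_apply_eq {x y : E} (h : ‖x‖ = ‖y‖) : ∃ T : E ≃ₗᵢ[ℝ] E, T x = y :=
  ⟨(ℝ ∙ (x - y))ᗮ.reflection, Submodule.reflection_sub h⟩

variable [MeasurableSpace E] {μ : Measure E}

lemma IsRotInvSphereProb.ae_mem (hμ : IsRotInvSphereProb μ) :
    ∀ᵐ x ∂μ, x ∈ Metric.sphere (0 : E) 1 := hμ.2.1

variable [BorelSpace E]

lemma IsRotInvSphereProb.integral_comp (hμ : IsRotInvSphereProb μ) (f : E → ℝ)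
    (T : E ≃ₗᵢ[ℝ] E) : ∫ x, f (T x) ∂μ = ∫ x, f x ∂μ := by
  conv_rhs => rw [← hμ.2.2 T]
  exact (T.toHomeomorph.measurableEmbedding.integral_map f).symm

variable [FiniteDimensional ℝ E]

lemma IsRotInvSphereProb.integrable (hμ : IsRotInvSphereProb μ) {f : E → ℝ}
    (hf : Continuous f) : Integrable f μ := by
  have := hμ.1
  have h := hf.continuousOn.integrableOn_compact (μ := μ) (isCompact_sphere (0 : E) 1)
  rwa [IntegrableOn, Measure.restrict_eq_self_of_ae_mem hμ.ae_mem] at h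

/-- A rotation-invariant probability measure on the sphere has full support: a null ball
centred on the sphere would have null rotated copies around every other point. -/
lemma IsRotInvSphereProb.eq_zero_of_integral_sq (hμ : IsRotInvSphereProb μ) {f : E → ℝ}
    (hf : Continuous f) (h0 : ∫ x, f x * f x ∂μ = 0) {x : E}
    (hx : x ∈ Metric.sphere (0 : E) 1) : f x = 0 := by
  have := hμ.1
  by_contra hne
  have hae : ∀ᵐ z ∂μ, f z = 0 := by
    have h1 := (integral_eq_zero_iff_of_nonneg (fun z => mul_self_nonneg (f z))
      (hμ.integrable (hf.mul hf))).1 h0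
    filter_upwards [h1] with z hz
    exact mul_self_eq_zero.1 hz
  obtain ⟨r, hr, hball⟩ := Metric.isOpen_iff.1 (isOpen_ne_fun hf continuous_const) x hne
  have hnull : μ (Metric.ball x r) = 0 := measure_mono_null hball hae
  have hsph : μ (Metric.sphere (0 : E) 1) = 0 := by
    refine measure_null_of_locally_null _ fun y hy => ?_
    refine ⟨Metric.ball y r, mem_nhdsWithin_of_mem_nhds (Metric.ball_mem_nhds y hr), ?_⟩
    obtain ⟨T, hT⟩ := exists_isometry_apply_eq (x := y) (y := x) (by
      rw [mem_sphere_zero_iff_norm.1 hx, mem_sphere_zero_iff_norm.1 hy])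
    have hpre : T ⁻¹' Metric.ball x r = Metric.ball y r := by
      ext z
      simp [← hT]
    rw [← hpre, ← Measure.map_apply T.continuous.measurable measurableSet_ball, hμ.2.2 T, hnull]
  have huniv : μ Set.univ = 0 := by
    rw [← Set.union_compl_self (Metric.sphere (0 : E) 1)]
    exact measure_union_null hsph hμ.2.1
  simp at huniv

/-- The reproducing kernel on the diagonal: if the span of a finite orthonormal family is
rotation-invariant, then `∑ bᵢ(x)²` is unchanged by rotations (each rotation acts by an orthogonal
matrix), hence constant on the sphere; its integral is the number of functions. -/
lemma IsRotInvSphereProb.sum_sq_eq_card (hμ : IsRotInvSphereProb μ) {ι : Type*} [Fintype ι]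
    [DecidableEq ι] {b : ι → E → ℝ} (hb : ∀ i, Continuous (b i))
    (horth : ∀ i j, ∫ x, b i x * b j x ∂μ = if i = j then 1 else 0)
    (hinv : ∀ (T : E ≃ₗᵢ[ℝ] E) i, ∃ c : ι → ℝ, ∀ x, b i (T x) = ∑ j, c j * b j x)
    {x : E} (hx : x ∈ Metric.sphere (0 : E) 1) :
    ∑ i, b i x ^ 2 = Fintype.card ι := by
  have := hμ.1
  have hT : ∀ (T : E ≃ₗᵢ[ℝ] E) (z : E), ∑ i, b i (T z) ^ 2 = ∑ i, b i z ^ 2 := by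
    intro T z
    choose A hA using hinv T
    have hAA : (Matrix.of A) * (Matrix.of A).transpose = 1 := by
      ext i l
      have h1 := hμ.integral_comp (fun x => b i x * b l x) T
      rw [horth] at h1
      have h2 : ∀ x, b i (T x) * b l (T x)
          = ∑ r : ι × ι, A i r.1 * A l r.2 * (b r.1 x * b r.2 x) := by
        intro x
        rw [hA, hA, Finset.sum_mul_sum, Fintype.sum_prod_type]
        refine Finset.sum_congr rfl fun p _ => Finset.sum_congr rfl fun q _ => by ring
      simp only [h2] at h1
      rw [integral_finsetSum _ (fun r _ => hμ.integrable (by fun_prop))] at h1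
      simp only [integral_const_mul, horth] at h1
      rw [Matrix.mul_apply, Matrix.one_apply, ← h1, Fintype.sum_prod_type]
      simp
    have hAA' := mul_eq_one_comm.1 hAA
    have h3 : (fun i => b i (T z)) = (Matrix.of A).mulVec (fun i => b i z) := by
      ext i
      simp [hA, Matrix.mulVec, dotProduct]
    have h4 : ∑ i, b i (T z) ^ 2 = (fun i => b i (T z)) ⬝ᵥ (fun i => b i (T z)) := by
      simp [dotProduct, sq]
    rw [h4, h3, Matrix.dotProduct_mulVec, Matrix.vecMul_mulVec, hAA', Matrix.vecMul_one]
    simp [dotProduct, sq]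
  have hconst : ∀ᵐ z ∂μ, ∑ i, b i z ^ 2 = ∑ i, b i x ^ 2 := by
    filter_upwards [hμ.ae_mem] with z hz
    obtain ⟨T, hTx⟩ := exists_isometry_apply_eq (x := x) (y := z) (by
      rw [mem_sphere_zero_iff_norm.1 hx, mem_sphere_zero_iff_norm.1 hz])
    rw [← hTx, hT]
  have hint : ∫ z, ∑ i, b i z ^ 2 ∂μ = Fintype.card ι := by
    rw [integral_finsetSum _ (fun i _ => hμ.integrable (by fun_prop))]
    simp [sq, horth]
  rw [← hint, integral_congr_ae hconst]
  simp

end SphereMeasure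

/-! ### Forms of fixed degree -/

section Forms

variable {n : ℕ}

lemma continuous_peval (p : MvPolynomial (Fin n) ℝ) : Continuous (peval p) :=
  p.continuous_eval.comp (by fun_prop)

lemma peval_smul_of_isHomogeneous {p : MvPolynomial (Fin n) ℝ} {m : ℕ} (hp : p.IsHomogeneous m)
    (c : ℝ) (x : EuclideanSpace ℝ (Fin n)) : peval p (c • x) = c ^ m * peval p x := by
  simp only [peval, MvPolynomial.eval_eq, Finset.mul_sum]
  refine Finset.sum_congr rfl fun d hd => ?_
  have hdeg : ∑ i ∈ d.support, d i = m := (hp.degree_eq_sum_deg_support hd).symm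
  simp only [PiLp.smul_apply, smul_eq_mul, mul_pow, Finset.prod_mul_distrib,
    Finset.prod_pow_eq_pow_sum, hdeg]
  ring

/-- Precomposition of a polynomial with a linear isometry. -/
def rotate (T : EuclideanSpace ℝ (Fin n) ≃ₗᵢ[ℝ] EuclideanSpace ℝ (Fin n))
    (p : MvPolynomial (Fin n) ℝ) : MvPolynomial (Fin n) ℝ :=
  aeval (fun i => ∑ j, C (T (EuclideanSpace.single j 1) i) * X j) p

lemma peval_rotate (T : EuclideanSpace ℝ (Fin n) ≃ₗᵢ[ℝ] EuclideanSpace ℝ (Fin n))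
    (p : MvPolynomial (Fin n) ℝ) (x : EuclideanSpace ℝ (Fin n)) :
    peval (rotate T p) x = peval p (T x) := by
  have hT : ∀ i, T x i = ∑ j, T (EuclideanSpace.single j 1) i * x j := by
    intro i
    have hx : x = ∑ j, x j • EuclideanSpace.single j (1 : ℝ) := by
      ext i
      simp [Pi.single_apply]
    conv_lhs => rw [hx]
    simp [mul_comm]
  have hcomp : ((MvPolynomial.aeval (fun i => x i) : MvPolynomial (Fin n) ℝ →ₐ[ℝ] ℝ).comp
      (aeval fun i => ∑ j, C (T (EuclideanSpace.single j 1) i) * X j))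
      = (MvPolynomial.aeval (fun i => T x i) : MvPolynomial (Fin n) ℝ →ₐ[ℝ] ℝ) := by
    ext i
    simp [hT]
  simpa [peval, rotate, MvPolynomial.aeval_eq_eval] using DFunLike.congr_fun hcomp p

lemma isHomogeneous_rotate (T : EuclideanSpace ℝ (Fin n) ≃ₗᵢ[ℝ] EuclideanSpace ℝ (Fin n))
    {p : MvPolynomial (Fin n) ℝ} {m : ℕ} (hp : p.IsHomogeneous m) :
    (rotate T p).IsHomogeneous m := by
  have := hp.aeval (fun i => ∑ j, C (T (EuclideanSpace.single j 1) i) * X j) (n := 1)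
    (fun i => IsHomogeneous.sum _ _ _ fun j _ => isHomogeneous_C_mul_X _ _)
  rwa [one_mul] at this

instance (m : ℕ) : FiniteDimensional ℝ (homogeneousSubmodule (Fin n) ℝ m) :=
  Module.Finite.iff_fg.2 (homogeneousSubmodule_fg _ _ m)

lemma finrank_homogeneousSubmodule_le (n m : ℕ) :
    Module.finrank ℝ (homogeneousSubmodule (Fin n) ℝ m) ≤ (n + m - 1).choose m := by
  have hcard := Finset.card_finsuppAntidiag_nat_eq_choose (s := (Finset.univ : Finset (Fin n))) m
  rw [Finset.card_univ, Fintype.card_fin] at hcard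
  let S : Finset (MvPolynomial (Fin n) ℝ) :=
    (Finset.finsuppAntidiag (Finset.univ : Finset (Fin n)) m).image fun d => monomial d 1
  have hle : homogeneousSubmodule (Fin n) ℝ m ≤ Submodule.span ℝ (S : Set _) := by
    intro p hp
    rw [p.as_sum]
    refine Submodule.sum_mem _ fun d hd => ?_
    have hd' : monomial d (1 : ℝ) ∈ S := by
      refine Finset.mem_image_of_mem _ ?_
      rw [Finset.mem_finsuppAntidiag]
      refine ⟨?_, Finset.subset_univ _⟩
      rw [IsHomogeneous.degree_eq_sum_deg_support hp hd]
      exact (Finset.sum_subset (Finset.subset_univ _) (by simp)).symm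
    have := Submodule.smul_mem _ (coeff d p) (Submodule.subset_span hd' :
      monomial d (1 : ℝ) ∈ Submodule.span ℝ (S : Set (MvPolynomial (Fin n) ℝ)))
    simpa [smul_monomial] using this
  calc Module.finrank ℝ (homogeneousSubmodule (Fin n) ℝ m)
      ≤ Module.finrank ℝ (Submodule.span ℝ (S : Set (MvPolynomial (Fin n) ℝ))) :=
        Submodule.finrank_mono hle
    _ ≤ S.card := finrank_span_finset_le_card S
    _ ≤ _ := Finset.card_image_le
    _ = _ := hcard

/-- The `L²(σ)` pairing is definite on forms of degree `m`: a form vanishing on the sphere vanishes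
everywhere by homogeneity. The degree is taken nonzero so that this also covers the origin. -/
lemma exists_orthonormal_forms {σ : Measure (EuclideanSpace ℝ (Fin n))}
    (hσ : IsRotInvSphereProb σ) (m : ℕ) (hm : m ≠ 0) :
    ∃ b : Module.Basis (Fin (Module.finrank ℝ (homogeneousSubmodule (Fin n) ℝ m))) ℝ
        (homogeneousSubmodule (Fin n) ℝ m),
      ∀ i j, pinner σ (b i) (b j) = if i = j then 1 else 0 := by
  let core : InnerProductSpace.Core ℝ (homogeneousSubmodule (Fin n) ℝ m) :=
    { inner := fun f g => pinner σ f g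
      conj_inner_symm := fun f g => by simp [pinner, mul_comm]
      re_inner_nonneg := fun f => integral_nonneg fun x => mul_self_nonneg _
      add_left := fun f g h => by
        have e : ∀ x, peval (f + g : MvPolynomial (Fin n) ℝ) x * peval (h : MvPolynomial _ ℝ) x
            = peval f.1 x * peval h.1 x + peval g.1 x * peval h.1 x := fun x => by
          simp [peval, add_mul]
        simp only [pinner, Submodule.coe_add, e]
        exact integral_add
          (hσ.integrable ((continuous_peval f.1).mul (continuous_peval h.1)))
          (hσ.integrable ((continuous_peval g.1).mul (continuous_peval h.1)))
      smul_left := fun f g r => by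
        simp [pinner, peval, mul_assoc, integral_const_mul]
      definite := fun f hf => by
        have hsph := fun x hx => hσ.eq_zero_of_integral_sq (continuous_peval f.1) hf (x := x) hx
        ext1
        refine MvPolynomial.funext fun v => ?_
        have hv : peval f.1 (WithLp.toLp 2 v) = 0 := by
          by_cases h0 : WithLp.toLp 2 v = 0
          · have := peval_smul_of_isHomogeneous f.2 0 (WithLp.toLp 2 v)
            rwa [zero_smul, zero_pow hm, zero_mul, ← h0] at this
          · have h1 := peval_smul_of_isHomogeneous f.2 ‖WithLp.toLp 2 v‖
              (‖WithLp.toLp 2 v‖⁻¹ • WithLp.toLp 2 v)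
            rw [smul_inv_smul₀ (norm_ne_zero_iff.2 h0), hsph (‖WithLp.toLp 2 v‖⁻¹ • WithLp.toLp 2 v) (by
              rw [mem_sphere_zero_iff_norm, norm_smul, norm_inv, norm_norm,
                inv_mul_cancel₀ (norm_ne_zero_iff.2 h0)]), mul_zero] at h1
            exact h1
        simpa [peval] using hv }
  let _ : NormedAddCommGroup (homogeneousSubmodule (Fin n) ℝ m) := core.toNormedAddCommGroup
  let _ : InnerProductSpace ℝ (homogeneousSubmodule (Fin n) ℝ m) := .ofCore core.toCore
  refine ⟨(stdOrthonormalBasis ℝ (homogeneousSubmodule (Fin n) ℝ m)).toBasis, fun i j => ?_⟩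
  have := orthonormal_iff_ite.1
    (stdOrthonormalBasis ℝ (homogeneousSubmodule (Fin n) ℝ m)).orthonormal i j
  rw [OrthonormalBasis.coe_toBasis]
  exact this

lemma sum_sq_peval_eq_card {σ : Measure (EuclideanSpace ℝ (Fin n))}
    (hσ : IsRotInvSphereProb σ) {ι : Type*} [Fintype ι] [DecidableEq ι]
    {b : ι → MvPolynomial (Fin n) ℝ}
    (horth : ∀ i j, pinner σ (b i) (b j) = if i = j then 1 else 0)
    (hinv : ∀ T i, ∃ c : ι → ℝ, rotate T (b i) = ∑ j, c j • b j)
    {x : EuclideanSpace ℝ (Fin n)} (hx : x ∈ Metric.sphere 0 1) :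
    ∑ i, peval (b i) x ^ 2 = Fintype.card ι := by
  refine hσ.sum_sq_eq_card (b := fun i => peval (b i)) (fun i => continuous_peval _) horth
    (fun T i => ?_) hx
  obtain ⟨c, hc⟩ := hinv T i
  refine ⟨c, fun z => ?_⟩
  rw [← peval_rotate, hc]
  simp [peval]

/-- Cauchy-Schwarz against the reproducing kernel: on the sphere a form of degree `m` satisfies
`f(x)² ≤ dim · ‖f‖²`, where `dim` is bounded by the number of monomials of degree `m`. -/
lemma sq_peval_le {σ : Measure (EuclideanSpace ℝ (Fin n))} (hσ : IsRotInvSphereProb σ)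
    {m : ℕ} (hm : m ≠ 0) {f : MvPolynomial (Fin n) ℝ} (hf : f.IsHomogeneous m)
    {x : EuclideanSpace ℝ (Fin n)} (hx : x ∈ Metric.sphere 0 1) :
    peval f x ^ 2 ≤ (n + m - 1).choose m * ∫ z, peval f z ^ 2 ∂σ := by
  obtain ⟨b, hb⟩ := exists_orthonormal_forms hσ m hm
  have hrepr : ∀ g (hg : g.IsHomogeneous m),
      ∃ c : Fin (Module.finrank ℝ (homogeneousSubmodule (Fin n) ℝ m)) → ℝ,
        g = ∑ j, c j • (b j : MvPolynomial (Fin n) ℝ) := by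
    intro g hg
    refine ⟨b.repr ⟨g, hg⟩, ?_⟩
    conv_lhs => rw [← Subtype.coe_mk (p := (· ∈ homogeneousSubmodule (Fin n) ℝ m)) g hg,
      ← b.sum_repr ⟨g, hg⟩]
    rw [Submodule.coe_sum]
    rfl
  have hK := sum_sq_peval_eq_card hσ hb
    (fun T i => hrepr _ (isHomogeneous_rotate T (b i).2)) hx
  rw [Fintype.card_fin] at hK
  obtain ⟨c, hc⟩ := hrepr f hf
  have hfz : ∀ z, peval f z = ∑ j, c j * peval (b j) z := fun z => by
    rw [hc]
    simp [peval]
  have hint : ∫ z, peval f z ^ 2 ∂σ = ∑ j, c j ^ 2 := by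
    have e : ∀ z, peval f z ^ 2 = ∑ i, ∑ j, c i * c j * (peval (b i) z * peval (b j) z) := by
      intro z
      rw [sq, hfz, Finset.sum_mul_sum]
      exact Finset.sum_congr rfl fun i _ => Finset.sum_congr rfl fun j _ => by ring
    have hi : ∀ i j, Integrable (fun z => c i * c j * (peval (b i) z * peval (b j) z)) σ :=
      fun i j => hσ.integrable (continuous_const.mul
        ((continuous_peval _).mul (continuous_peval _)))
    simp only [e]
    rw [integral_finsetSum _ fun i _ => integrable_finsetSum _ fun j _ => hi i j]
    refine Finset.sum_congr rfl fun i _ => ?_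
    rw [integral_finsetSum _ fun j _ => hi i j]
    have hb' : ∀ i j, ∫ z, peval (b i) z * peval (b j) z ∂σ = if i = j then 1 else 0 := hb
    simp [integral_const_mul, hb', sq]
  calc peval f x ^ 2 = (∑ j, c j * peval (b j) x) ^ 2 := by rw [hfz]
    _ ≤ (∑ j, c j ^ 2) * ∑ j, peval (b j) x ^ 2 := Finset.sum_mul_sq_le_sq_mul_sq _ _ _
    _ = Module.finrank ℝ (homogeneousSubmodule (Fin n) ℝ m) * ∫ z, peval f z ^ 2 ∂σ := by
      rw [hK, hint, mul_comm]
    _ ≤ _ := mul_le_mul_of_nonneg_right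
      (by exact_mod_cast finrank_homogeneousSubmodule_le n m)
      (integral_nonneg fun z => sq_nonneg (peval f z))

end Forms

/-! ### Moments of linear functionals on the sphere -/

section Moments

/-- The sign `±1` encoded by a Boolean. -/
def boolSign (b : Bool) : ℝ := if b then 1 else -1

lemma sum_exp_sign {D : ℕ} (t : ℝ) (y : Fin D → ℝ) :
    ∑ ε : Fin D → Bool, Real.exp (t * ∑ i, boolSign (ε i) * y i)
      = ∏ i, (2 * Real.cosh (t * y i)) := by
  have h : ∀ i, 2 * Real.cosh (t * y i) = ∑ b : Bool, Real.exp (t * (boolSign b * y i)) := by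
    intro i
    rw [Real.cosh_eq]
    simp [boolSign]
    ring
  simp_rw [h, Finset.prod_univ_sum, Fintype.piFinset_univ, Finset.mul_sum, Real.exp_sum]

/-- A Khinchine-type inequality, from `s ^ (2 * p) / (2 * p)! ≤ cosh s` and
`cosh s ≤ exp (s ^ 2 / 2)`. -/
lemma sum_sign_pow_le {D : ℕ} {y : Fin D → ℝ} (hy : ∑ i, y i ^ 2 = 1) (p : ℕ) :
    (2 * p : ℝ) ^ p * ∑ ε : Fin D → Bool, (∑ i, boolSign (ε i) * y i) ^ (2 * p)
      ≤ 2 ^ D * ((2 * p).factorial * Real.exp p) := by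
  -- `t ^ 2 = 2 p` minimises the resulting constant `(2p)! * exp (t² / 2) / t ^ (2p)`
  set t : ℝ := √(2 * p) with ht
  have ht2 : t ^ 2 = 2 * p := Real.sq_sqrt (by positivity)
  have hprod : ∏ i, (2 * Real.cosh (t * y i)) ≤ 2 ^ D * Real.exp p := by
    rw [Finset.prod_mul_distrib, Finset.prod_const, Finset.card_univ, Fintype.card_fin]
    gcongr
    calc ∏ i, Real.cosh (t * y i) ≤ ∏ i, Real.exp ((t * y i) ^ 2 / 2) :=
          Finset.prod_le_prod (fun i _ => (Real.cosh_pos _).le)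
            fun i _ => Real.cosh_le_exp_half_sq _
      _ = Real.exp p := by
          rw [← Real.exp_sum, ← Finset.sum_div]
          simp_rw [mul_pow]
          rw [← Finset.mul_sum, hy, ht2]
          congr 1
          ring
  have hcosh : ∑ ε : Fin D → Bool, Real.cosh (t * ∑ i, boolSign (ε i) * y i)
      = ∏ i, (2 * Real.cosh (t * y i)) := by
    have h2 := sum_exp_sign (-t) y
    simp only [neg_mul, Real.cosh_neg] at h2
    simp only [Real.cosh_eq]
    rw [← Finset.sum_div, Finset.sum_add_distrib, h2, sum_exp_sign]
    simp only [Real.cosh_eq]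
    ring
  have hterm : ∀ s : ℝ, (2 * p : ℝ) ^ p * s ^ (2 * p)
      ≤ (2 * p).factorial * Real.cosh (t * s) := by
    intro s
    have h := le_hasSum (Real.hasSum_cosh (t * s)) p fun j _ =>
      div_nonneg (by rw [pow_mul]; positivity) (by positivity)
    rw [div_le_iff₀ (by positivity), mul_pow, pow_mul t, ht2] at h
    linarith
  calc _ = ∑ ε : Fin D → Bool, (2 * p : ℝ) ^ p * (∑ i, boolSign (ε i) * y i) ^ (2 * p) :=
        Finset.mul_sum _ _ _
    _ ≤ ∑ ε : Fin D → Bool,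
          (2 * p).factorial * Real.cosh (t * ∑ i, boolSign (ε i) * y i) :=
        Finset.sum_le_sum fun ε _ => hterm _
    _ = (2 * p).factorial * ∏ i, (2 * Real.cosh (t * y i)) := by
        rw [← Finset.mul_sum, hcosh]
    _ ≤ (2 * p).factorial * (2 ^ D * Real.exp p) := by gcongr
    _ = _ := by ring

lemma factorial_mul_exp_le (p : ℕ) :
    ((2 * p).factorial : ℝ) * Real.exp p ≤ (2 * p) ^ p * (8 ^ p * p.factorial) := by
  have h1 : ((2 * p).factorial : ℝ) ≤ 4 ^ p * p.factorial * p ^ p := by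
    have h : (2 * p).factorial = p.centralBinom * p.factorial * p.factorial := by
      have := Nat.choose_mul_factorial_mul_factorial (show p ≤ 2 * p by omega)
      rw [show 2 * p - p = p by omega] at this
      exact this.symm
    have h' : (2 * p).factorial ≤ 4 ^ p * p.factorial * p ^ p := by
      rw [h]
      gcongr
      · exact Nat.centralBinom_le_four_pow p
      · exact Nat.factorial_le_pow p
    exact_mod_cast h'
  have h2 : Real.exp p ≤ 4 ^ p := by
    have h : Real.exp p = Real.exp 1 ^ p := by rw [← Real.exp_nat_mul, mul_one]
    rw [h]
    gcongr
    linarith [Real.exp_one_lt_d9]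
  calc ((2 * p).factorial : ℝ) * Real.exp p ≤ (4 ^ p * p.factorial * p ^ p) * 4 ^ p := by gcongr
    _ = _ := by
      rw [mul_pow, show (8 : ℝ) = 4 * 2 by norm_num, mul_pow]
      have : (4 : ℝ) ^ p = 2 ^ p * 2 ^ p := by rw [← mul_pow]; norm_num
      rw [this]
      ring

/-- By rotation invariance the moment of `⟪·, v⟫` with `‖v‖² = D` is the average of the moments of
`⟪·, ε⟫` over the sign vectors `ε`. -/
lemma IsRotInvSphereProb.integral_inner_pow_le {D : ℕ} {μ : Measure (EuclideanSpace ℝ (Fin D))}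
    (hμ : IsRotInvSphereProb μ) {v : EuclideanSpace ℝ (Fin D)} (hv : ‖v‖ ^ 2 = D) {p : ℕ}
    (hp : p ≠ 0) :
    ∫ y, ⟪y, v⟫ ^ (2 * p) ∂μ ≤ 8 ^ p * p.factorial := by
  have := hμ.1
  have hsign : ∀ ε : Fin D → Bool,
      ∫ y : EuclideanSpace ℝ (Fin D), (∑ i, boolSign (ε i) * y i) ^ (2 * p) ∂μ
        = ∫ y, ⟪y, v⟫ ^ (2 * p) ∂μ := by
    intro ε
    let e : EuclideanSpace ℝ (Fin D) := WithLp.toLp 2 fun i => boolSign (ε i)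
    have he : ‖e‖ = ‖v‖ := by
      rw [← sq_eq_sq₀ (norm_nonneg _) (norm_nonneg _), hv, EuclideanSpace.real_norm_sq_eq]
      have : ∀ b, boolSign b ^ 2 = 1 := fun b => by cases b <;> simp [boolSign]
      simp [e, this]
    obtain ⟨T, hT⟩ := exists_isometry_apply_eq he
    rw [← hμ.integral_comp (fun y => ⟪y, v⟫ ^ (2 * p)) T]
    refine integral_congr_ae (.of_forall fun y => ?_)
    have : ⟪T y, v⟫ = ⟪y, e⟫ := by rw [← hT, T.inner_map_map]
    simp [this, e, PiLp.inner_apply]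
  have hpos : (0 : ℝ) < (2 * p) ^ p := by positivity
  have key : (2 * p : ℝ) ^ p * (2 ^ D * ∫ y, ⟪y, v⟫ ^ (2 * p) ∂μ)
      ≤ 2 ^ D * ((2 * p).factorial * Real.exp p) := by
    have hI : ∀ ε : Fin D → Bool, Integrable
        (fun y : EuclideanSpace ℝ (Fin D) => (∑ i, boolSign (ε i) * y i) ^ (2 * p)) μ :=
      fun ε => hμ.integrable (by fun_prop)
    calc _ = ∫ y : EuclideanSpace ℝ (Fin D), (2 * p : ℝ) ^ p *
          ∑ ε : Fin D → Bool, (∑ i, boolSign (ε i) * y i) ^ (2 * p) ∂μ := by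
          rw [integral_const_mul, integral_finsetSum _ fun ε _ => hI ε]
          simp [hsign]
      _ ≤ ∫ _, 2 ^ D * ((2 * p).factorial * Real.exp p) ∂μ := by
          refine integral_mono_ae ((integrable_finsetSum _ fun ε _ => hI ε).const_mul _)
            (integrable_const _) ?_
          filter_upwards [hμ.ae_mem] with y hy
          refine sum_sign_pow_le ?_ p
          rw [← EuclideanSpace.real_norm_sq_eq, mem_sphere_zero_iff_norm.1 hy, one_pow]
      _ = _ := by simp
  have h2 := key.trans (mul_le_mul_of_nonneg_left (factorial_mul_exp_le p) (by positivity))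
  have h3 : (2 : ℝ) ^ D * (2 * p) ^ p * ∫ y, ⟪y, v⟫ ^ (2 * p) ∂μ
      ≤ 2 ^ D * (2 * p) ^ p * (8 ^ p * p.factorial) := by linarith
  exact le_of_mul_le_mul_left h3 (by positivity)

end Moments

/-! ### The bound -/

lemma choose_mul_factorial_le {n : ℕ} (hn : 1 ≤ n) (k : ℕ) :
    (n + 2 * k * n - 1).choose (2 * k * n) * n.factorial ≤ (n * (2 * k + 1)) ^ n := by
  obtain ⟨q, rfl⟩ : ∃ q, n = q + 1 := ⟨n - 1, by omega⟩
  set m := 2 * k * (q + 1) with hm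
  have hN : (q + 1) * (2 * k + 1) = q + 1 + m := by rw [hm]; ring
  rw [hN, show q + 1 + m - 1 = q + m by omega, Nat.choose_symm_add.symm, Nat.factorial_succ,
    show (q + m).choose q * ((q + 1) * q.factorial)
      = (q + 1) * (q.factorial * (q + m).choose q) by ring,
    ← Nat.descFactorial_eq_factorial_mul_choose, pow_succ']
  exact Nat.mul_le_mul (by omega)
    ((Nat.descFactorial_le_pow _ _).trans (Nat.pow_le_pow_left (by omega) _))

section Bound

variable {n k D : ℕ} {σ : Measure (EuclideanSpace ℝ (Fin n))}
  {φ : EuclideanSpace ℝ (Fin D) →ₗ[ℝ] MvPolynomial (Fin n) ℝ}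

lemma map_eq_sum (φ : EuclideanSpace ℝ (Fin D) →ₗ[ℝ] MvPolynomial (Fin n) ℝ)
    (y : EuclideanSpace ℝ (Fin D)) : φ y = ∑ i, y i • φ (EuclideanSpace.single i 1) := by
  conv_lhs => rw [show y = ∑ i, y i • EuclideanSpace.single i (1 : ℝ) by
    ext i
    simp [Pi.single_apply]]
  simp

lemma peval_map_eq_sum (φ : EuclideanSpace ℝ (Fin D) →ₗ[ℝ] MvPolynomial (Fin n) ℝ)
    (y : EuclideanSpace ℝ (Fin D)) (x : EuclideanSpace ℝ (Fin n)) :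
    peval (φ y) x = ∑ i, y i * peval (φ (EuclideanSpace.single i 1)) x := by
  rw [map_eq_sum φ y]
  simp [peval]

/-- The vector of `EuclideanSpace ℝ (Fin D)` representing evaluation at a point of the sphere has
norm `√D`. -/
lemma IsCoordOfM.sum_sq_eq (hσ : IsRotInvSphereProb σ) (hφ : IsCoordOfM n k D σ φ)
    {x : EuclideanSpace ℝ (Fin n)} (hx : x ∈ Metric.sphere 0 1) :
    ∑ i, peval (φ (EuclideanSpace.single i 1)) x ^ 2 = D := by
  have hM : ∀ y, φ y ∈ Mset n k σ := fun y => hφ.2.1 ▸ Set.mem_range_self y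
  rw [sum_sq_peval_eq_card hσ (b := fun i => φ (EuclideanSpace.single i 1)) _ _ hx,
    Fintype.card_fin]
  · intro i j
    rw [hφ.2.2]
    exact orthonormal_iff_ite.1 EuclideanSpace.orthonormal_single i j
  · intro T i
    have hmem : rotate T (φ (EuclideanSpace.single i 1)) ∈ Mset n k σ := by
      refine ⟨isHomogeneous_rotate T (hM _).1, ?_⟩
      simp only [peval_rotate]
      rw [hσ.integral_comp (fun x => peval (φ (EuclideanSpace.single i 1)) x) T]
      exact (hM _).2
    rw [← hφ.2.1] at hmem
    obtain ⟨y, hy⟩ := hmem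
    exact ⟨y, by rw [← hy, map_eq_sum]⟩

lemma IsCoordOfM.integral_pow_le (hσ : IsRotInvSphereProb σ) (hφ : IsCoordOfM n k D σ φ)
    {μ : Measure (EuclideanSpace ℝ (Fin D))} (hμ : IsRotInvSphereProb μ) {p : ℕ} (hp : p ≠ 0)
    {x : EuclideanSpace ℝ (Fin n)} (hx : x ∈ Metric.sphere 0 1) :
    ∫ y, peval (φ y) x ^ (2 * p) ∂μ ≤ 8 ^ p * p.factorial := by
  let v : EuclideanSpace ℝ (Fin D) :=
    WithLp.toLp 2 fun i => peval (φ (EuclideanSpace.single i 1)) x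
  have hv : ‖v‖ ^ 2 = D := by
    rw [EuclideanSpace.real_norm_sq_eq]
    exact hφ.sum_sq_eq hσ hx
  have h : ∀ y, peval (φ y) x = ⟪y, v⟫ := fun y => by
    rw [peval_map_eq_sum]
    simp [v, PiLp.inner_apply, mul_comm]
  simp only [h]
  exact hμ.integral_inner_pow_le hv hp

lemma integrable_prod_peval (hσ : IsRotInvSphereProb σ)
    {μ : Measure (EuclideanSpace ℝ (Fin D))} (hμ : IsRotInvSphereProb μ) (p : ℕ) :
    Integrable (fun z : EuclideanSpace ℝ (Fin D) × EuclideanSpace ℝ (Fin n) =>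
      peval (φ z.1) z.2 ^ p) (μ.prod σ) := by
  have := hσ.1
  have := hμ.1
  have hcont : Continuous fun z : EuclideanSpace ℝ (Fin D) × EuclideanSpace ℝ (Fin n) =>
      peval (φ z.1) z.2 ^ p := by
    rw [funext fun z : EuclideanSpace ℝ (Fin D) × EuclideanSpace ℝ (Fin n) =>
      congrArg (· ^ p) (peval_map_eq_sum φ z.1 z.2)]
    have := fun i => continuous_peval (φ (EuclideanSpace.single i 1))
    fun_prop
  have h := hcont.continuousOn.integrableOn_compact (μ := μ.prod σ)
    ((isCompact_sphere (0 : EuclideanSpace ℝ (Fin D)) 1).prod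
      (isCompact_sphere (0 : EuclideanSpace ℝ (Fin n)) 1))
  rwa [IntegrableOn, ← Measure.prod_restrict, Measure.restrict_eq_self_of_ae_mem hσ.ae_mem,
    Measure.restrict_eq_self_of_ae_mem hμ.ae_mem] at h

end Bound

/-- Theorem 3.2: bound on the average L^∞ norm over the unit sphere of M. -/
theorem average_sup_norm_bound
    (n k D : ℕ) (hn : 1 ≤ n) (hk : 1 ≤ k)
    (σ : Measure (EuclideanSpace ℝ (Fin n))) (hσ : IsRotInvSphereProb σ)
    (φ : EuclideanSpace ℝ (Fin D) →ₗ[ℝ] MvPolynomial (Fin n) ℝ)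
    (hφ : IsCoordOfM n k D σ φ)
    (μ : Measure (EuclideanSpace ℝ (Fin D))) (hμ : IsRotInvSphereProb μ) :
    ∫ y, supNorm (φ y) ∂μ ≤ 2 * Real.sqrt (2 * (n : ℝ) * (2 * (k : ℝ) + 1)) := by
  have := hσ.1
  have := hμ.1
  have hn0 : n ≠ 0 := by omega
  set c : ℝ := 2 * Real.sqrt (2 * (n : ℝ) * (2 * (k : ℝ) + 1)) with hc
  have hc0 : 0 < c := by positivity
  have hc2 : c ^ (2 * n) = 8 ^ n * (n * (2 * k + 1)) ^ n := by
    rw [pow_mul, hc, mul_pow, Real.sq_sqrt (by positivity), ← mul_pow]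
    congr 1
    ring
  set A : ℝ := (((n + 2 * k * n - 1).choose (2 * k * n) : ℕ) : ℝ) with hA
  have hA0 : 0 ≤ A := Nat.cast_nonneg _
  have hAle : A * n.factorial ≤ (n * (2 * k + 1)) ^ n := by
    rw [hA]
    exact_mod_cast choose_mul_factorial_le hn k
  let F : EuclideanSpace ℝ (Fin D) → ℝ := fun y => ∫ x, peval (φ y) x ^ (2 * n) ∂σ
  have hFint : Integrable F μ := (integrable_prod_peval hσ hμ (2 * n)).integral_prod_left
  have hF : ∫ y, F y ∂μ ≤ 8 ^ n * n.factorial := by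
    rw [show ∫ y, F y ∂μ = ∫ x, ∫ y, peval (φ y) x ^ (2 * n) ∂μ ∂σ from
      integral_integral_swap (integrable_prod_peval hσ hμ (2 * n))]
    calc _ ≤ ∫ _, (8 ^ n * n.factorial : ℝ) ∂σ := by
          refine integral_mono_ae (integrable_prod_peval hσ hμ (2 * n)).integral_prod_right
            (integrable_const _) ?_
          filter_upwards [hσ.ae_mem] with x hx
          exact hφ.integral_pow_le hσ hμ hn0 hx
      _ = _ := by simp
  have hne : (Metric.sphere (0 : EuclideanSpace ℝ (Fin n)) 1).Nonempty := by
    have : Nonempty (Fin n) := ⟨⟨0, hn⟩⟩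
    exact NormedSpace.sphere_nonempty.2 zero_le_one
  have hpt : ∀ y, supNorm (φ y) ≤ c * (1 + (A * F y / c ^ (2 * n) - 1) / (2 * n)) := by
    intro y
    refine csSup_le (hne.image _) ?_
    rintro _ ⟨x, hx, rfl⟩
    have hhom : (φ y ^ n).IsHomogeneous (2 * k * n) :=
      ((hφ.2.1 ▸ Set.mem_range_self y : φ y ∈ Mset n k σ).1).pow n
    have h1 := sq_peval_le hσ (m := 2 * k * n) (by positivity) hhom hx
    have hpow : ∀ z, peval (φ y ^ n) z ^ 2 = peval (φ y) z ^ (2 * n) := fun z => by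
      simp only [peval, map_pow]
      rw [← pow_mul, mul_comm]
    simp only [hpow] at h1
    have h2 : (|peval (φ y) x| / c) ^ (2 * n) ≤ A * F y / c ^ (2 * n) := by
      rw [div_pow, (even_two_mul n).pow_abs]
      gcongr
    -- Bernoulli's inequality replaces Jensen's inequality for the power `2 * n`
    have h3 := one_add_mul_le_pow (a := |peval (φ y) x| / c - 1)
      (by have : 0 ≤ |peval (φ y) x| / c := by positivity
          linarith) (2 * n)
    rw [add_sub_cancel] at h3
    push_cast at h3
    have hn' : (0 : ℝ) < 2 * n := by positivity
    have h4 : |peval (φ y) x| / c ≤ 1 + (A * F y / c ^ (2 * n) - 1) / (2 * n) := by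
      rw [← sub_le_iff_le_add', le_div_iff₀ hn']
      linarith
    rwa [div_le_iff₀' hc0] at h4
  have hint : Integrable (fun y => c * (1 + (A * F y / c ^ (2 * n) - 1) / (2 * n))) μ := by
    fun_prop
  calc ∫ y, supNorm (φ y) ∂μ ≤ ∫ y, c * (1 + (A * F y / c ^ (2 * n) - 1) / (2 * n)) ∂μ := by
        refine integral_mono_of_nonneg (.of_forall fun y => ?_) hint (.of_forall hpt)
        refine Real.sSup_nonneg ?_
        rintro _ ⟨x, -, rfl⟩
        exact abs_nonneg _
    _ = c * (1 + (A * (∫ y, F y ∂μ) / c ^ (2 * n) - 1) / (2 * n)) := by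
        rw [integral_const_mul, integral_add (by fun_prop) (by fun_prop), integral_div,
          integral_sub (by fun_prop) (by fun_prop), integral_div, integral_const_mul]
        simp
    _ ≤ c * (1 + 0) := by
        gcongr
        refine div_nonpos_of_nonpos_of_nonneg ?_ (by positivity)
        rw [sub_nonpos, div_le_one (by positivity), hc2]
        calc A * ∫ y, F y ∂μ ≤ A * (8 ^ n * n.factorial) := by gcongr
          _ = 8 ^ n * (A * n.factorial) := by ring
          _ ≤ _ := by gcongr
    _ = c := by ring

end
end

section
/- For all integers n ≥ 1 and k ≥ 1, the binomial coefficient satisfies C(2kn+n−1, 2kn)^{1/(2n)} ≤ 2·√(2k+1). -/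
/-!
With `m = 2k + 1`, the binomial coefficient is `C(mn - 1, n - 1) ≤ C(mn, n) ≤ (mn)ⁿ / n!`. Since
`nⁿ / n! ≤ eⁿ`, this is at most `(em)ⁿ ≤ (4m)ⁿ = (2√m)²ⁿ`, and taking `2n`-th roots gives the bound.
-/

open MeasureTheory MvPolynomial
open scoped ENNReal RealInnerProductSpace

noncomputable section

/-- The crude estimate `C(mn, n) ≤ (4m)ⁿ`, where `4` serves as an upper bound for `e`. -/
theorem choose_mul_le_four_mul_pow (m n : ℕ) :
    ((Nat.choose (m * n) n : ℕ) : ℝ) ≤ (4 * (m : ℝ)) ^ n := by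
  have hexp : Real.exp n ≤ 4 ^ n := by
    rw [← Real.exp_one_pow]
    exact pow_le_pow_left₀ (Real.exp_pos 1).le (by linarith [Real.exp_one_lt_d9]) n
  calc ((Nat.choose (m * n) n : ℕ) : ℝ)
      ≤ ((m * n : ℕ) : ℝ) ^ n / (n.factorial : ℝ) := Nat.choose_le_pow_div n (m * n)
    _ = (m : ℝ) ^ n * ((n : ℝ) ^ n / (n.factorial : ℝ)) := by push_cast; ring
    _ ≤ (m : ℝ) ^ n * 4 ^ n := by
        gcongr
        exact (Real.pow_div_factorial_le_exp (n : ℝ) n.cast_nonneg n).trans hexp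
    _ = (4 * (m : ℝ)) ^ n := by ring

/-- Bound on the binomial coefficient appearing in Barvinok's inequality. -/
theorem binomial_coefficient_bound (n k : ℕ) (hn : 1 ≤ n) (hk : 1 ≤ k) :
    ((Nat.choose (2 * k * n + n - 1) (2 * k * n) : ℝ)) ^ (1 / (2 * (n : ℝ))) ≤
      2 * Real.sqrt (2 * (k : ℝ) + 1) := by
  have hchoose : Nat.choose (2 * k * n + n - 1) (2 * k * n) ≤ Nat.choose ((2 * k + 1) * n) n := by
    have hN : (2 * k + 1) * n = 2 * k * n + n := by ring
    rw [hN, Nat.choose_symm_add.symm]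
    exact Nat.choose_le_choose _ (Nat.sub_le _ _)
  have hpow : (Nat.choose (2 * k * n + n - 1) (2 * k * n) : ℝ) ≤
      (2 * Real.sqrt (2 * (k : ℝ) + 1)) ^ (2 * n) := by
    calc (Nat.choose (2 * k * n + n - 1) (2 * k * n) : ℝ)
        ≤ (Nat.choose ((2 * k + 1) * n) n : ℝ) := by exact_mod_cast hchoose
      _ ≤ (4 * ((2 * k + 1 : ℕ) : ℝ)) ^ n := choose_mul_le_four_mul_pow _ _
      _ = (2 * Real.sqrt (2 * (k : ℝ) + 1)) ^ (2 * n) := by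
          rw [pow_mul, mul_pow 2 (Real.sqrt _) 2, Real.sq_sqrt (by positivity)]
          push_cast
          norm_num
  calc (Nat.choose (2 * k * n + n - 1) (2 * k * n) : ℝ) ^ (1 / (2 * (n : ℝ)))
      ≤ ((2 * Real.sqrt (2 * (k : ℝ) + 1)) ^ (2 * n)) ^ (1 / (2 * (n : ℝ))) := by gcongr
    _ = 2 * Real.sqrt (2 * (k : ℝ) + 1) := by
        have h := Real.pow_rpow_inv_natCast
          (show 0 ≤ 2 * Real.sqrt (2 * (k : ℝ) + 1) by positivity) (show 2 * n ≠ 0 by lia)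
        simpa [one_div] using h

end
end

section
/- Let n ≥ 1 and k ≥ 1 be integers, and set D_{n,k} = C(n+k−1, k) and D_M = C(n+2k−1, 2k) − 1. Then √(D_{n,k} / D_M) ≤ ((2k)!/k!) · n^{-k/2}. -/
/-!
Write `A = C(n+k-1, k)` and `B = C(n+2k-1, 2k)`. Rising factorials give
`B * (2k)! = A * k! * (n+k)(n+k+1)⋯(n+2k-1)`, hence `n ^ k * A * k! ≤ B * (2k)!`
(`pow_mul_choose_mul_factorial_le`).
For `n ≥ 2` one has `B ≥ 2`, so `B ≤ 2 (B - 1)`, while `2 * k! ≤ (2k)!`; thus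
`n ^ k * A * (k!)² ≤ B * (2k)! * k! ≤ ((2k)!)² (B - 1)`, which is the square of the claim.
For `n = 1` the denominator `B - 1` vanishes, and the quotient is `0` by convention.
-/

open MeasureTheory MvPolynomial
open scoped ENNReal RealInnerProductSpace

noncomputable section

theorem pow_mul_choose_mul_factorial_le (n k : ℕ) :
    n ^ k * (n + k - 1).choose k * k.factorial ≤
      (n + 2 * k - 1).choose (2 * k) * (2 * k).factorial := by
  have hA := Nat.ascFactorial_eq_factorial_mul_choose' n k
  have hB := Nat.ascFactorial_eq_factorial_mul_choose' n (2 * k)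
  have hmul := Nat.ascFactorial_mul_ascFactorial n k k
  have hpow : n ^ k ≤ (n + k).ascFactorial k :=
    (Nat.pow_le_pow_left (Nat.le_add_right n k) k).trans (Nat.pow_succ_le_ascFactorial _ _)
  rw [← two_mul] at hmul
  calc n ^ k * (n + k - 1).choose k * k.factorial
      = n.ascFactorial k * n ^ k := by rw [hA]; ring
    _ ≤ n.ascFactorial k * (n + k).ascFactorial k := Nat.mul_le_mul_left _ hpow
    _ = _ := by rw [hmul, hB]; ring

theorem two_mul_factorial_le (k : ℕ) (hk : 1 ≤ k) :
    2 * k.factorial ≤ (2 * k).factorial :=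
  calc 2 * k.factorial ≤ (k + 1) * k.factorial := Nat.mul_le_mul_right _ (by omega)
    _ = (k + 1).factorial := (Nat.factorial_succ k).symm
    _ ≤ (2 * k).factorial := Nat.factorial_le (by omega)

theorem two_le_choose (n k : ℕ) (hn : 2 ≤ n) (hk : 1 ≤ k) :
    2 ≤ (n + 2 * k - 1).choose (2 * k) :=
  calc 2 ≤ (2 * k + 1).choose (2 * k) := by rw [Nat.choose_succ_self_right]; omega
    _ ≤ _ := Nat.choose_le_choose _ (by omega)

/-- √(D_{n,k}/D_M) ≤ ((2k)!/k!) n^{-k/2}. -/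
theorem dimension_ratio_bound (n k : ℕ) (hn : 1 ≤ n) (hk : 1 ≤ k) :
    Real.sqrt ((Nat.choose (n + k - 1) k : ℝ) /
        ((Nat.choose (n + 2 * k - 1) (2 * k) : ℝ) - 1)) ≤
      (Nat.factorial (2 * k) : ℝ) / (Nat.factorial k : ℝ) * (n : ℝ) ^ (-(k : ℝ) / 2) := by
  rcases hn.eq_or_lt with rfl | hn2
  · have h : 1 + 2 * k - 1 = 2 * k := by omega
    rw [h, Nat.choose_self]
    simp only [Nat.cast_one, sub_self, div_zero, Real.sqrt_zero]
    positivity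
  have h1 : (n : ℝ) ^ k * ((n + k - 1).choose k : ℝ) * (k.factorial : ℝ) ≤
      ((n + 2 * k - 1).choose (2 * k) : ℝ) * ((2 * k).factorial : ℝ) := by
    exact_mod_cast pow_mul_choose_mul_factorial_le n k
  have h2 : 2 * (k.factorial : ℝ) ≤ ((2 * k).factorial : ℝ) := by
    exact_mod_cast two_mul_factorial_le k hk
  have h3 : (2 : ℝ) ≤ ((n + 2 * k - 1).choose (2 * k) : ℝ) := by
    exact_mod_cast two_le_choose n k hn2 hk
  have hn0 : (0 : ℝ) < n := by exact_mod_cast hn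
  have hf : (0 : ℝ) < (k.factorial : ℝ) := by exact_mod_cast k.factorial_pos
  have hsq : ((n : ℝ) ^ (-(k : ℝ) / 2)) ^ 2 = ((n : ℝ) ^ k)⁻¹ := by
    rw [← Real.rpow_natCast, ← Real.rpow_mul hn0.le, ← Real.rpow_natCast, ← Real.rpow_neg hn0.le]
    congr 1
    push_cast
    ring
  apply Real.sqrt_le_iff.mpr
  refine ⟨by positivity, ?_⟩
  rw [mul_pow, hsq, div_pow, ← div_eq_mul_inv, div_div]
  generalize ((n + k - 1).choose k : ℝ) = A at *
  generalize ((n + 2 * k - 1).choose (2 * k) : ℝ) = B at *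
  generalize ((2 * k).factorial : ℝ) = F at *
  generalize (k.factorial : ℝ) = f at *
  have hP : (0 : ℝ) < (n : ℝ) ^ k := by positivity
  generalize (n : ℝ) ^ k = P at *
  rw [div_le_div_iff₀ (by linarith) (by positivity)]
  have hF : 0 < F := by linarith
  calc A * (f ^ 2 * P) = P * A * f * f := by ring
    _ ≤ B * F * f := mul_le_mul_of_nonneg_right h1 hf.le
    _ ≤ (2 * (B - 1)) * F * f := by gcongr; linarith
    _ = (B - 1) * F * (2 * f) := by ring
    _ ≤ (B - 1) * F * F :=
      mul_le_mul_of_nonneg_left h2 (mul_nonneg (by linarith) hF.le)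
    _ = F ^ 2 * (B - 1) := by ring

end
end
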